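/- Let η be a numerical submeasure on a ring Σ. Then γ defined by γ_E(x) = max(min(1 + x − η(E), 1), 0) for x > 0 is a τ_{L,W}-submeasure for any L ≥ K₁ (pointwise above addition), where W is the Łukasiewicz t-norm W(u,v) = max(u+v−1, 0). In particular, γ_{E∪F}(x+y) ≥ max(γ_E(x) + γ_F(y) − 1, 0) for all x,y > 0 and E,F ∈ Σ. -/

import Mathlib

open Set
open scoped ENNReal Classical

noncomputable section

def eps0 (x : ℝ) : ℝ := if 0 < x then 1 else 0

def IsDistrFn (F : ℝ → ℝ) : Prop :=
  Monotone F ∧ (∀ x, x ≤ 0 → F x = 0) ∧ (∀ x, F x ≤ 1)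

def IsSetRing {Ω : Type*} (R : Set (Set Ω)) : Prop :=
  ∅ ∈ R ∧ (∀ E F : Set Ω, E ∈ R → F ∈ R → E ∪ F ∈ R) ∧
    (∀ E F : Set Ω, E ∈ R → F ∈ R → E \ F ∈ R)

def IsNumSubmeasure {Ω : Type*} (R : Set (Set Ω)) (η : Set Ω → ℝ≥0∞) : Prop :=
  η ∅ = 0 ∧ (∀ E F : Set Ω, E ∈ R → F ∈ R → E ⊆ F → η E ≤ η F) ∧
    (∀ E F : Set Ω, E ∈ R → F ∈ R → η (E ∪ F) ≤ η E + η F)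

/-- `γ` is a `τ_{L,A}`-submeasure on the ring `R`. -/
def IsTauSub {Ω : Type*} (R : Set (Set Ω)) (L : ℝ → ℝ → ℝ) (A : ℝ → ℝ → ℝ)
    (γ : Set Ω → ℝ → ℝ) : Prop :=
  (∀ E, E ∈ R → IsDistrFn (γ E)) ∧
  (∀ x, γ ∅ x = eps0 x) ∧
  (∀ E F : Set Ω, E ∈ R → F ∈ R → E ⊆ F → ∀ x, γ F x ≤ γ E x) ∧
  (∀ E F : Set Ω, E ∈ R → F ∈ R → ∀ x y : ℝ, 0 < x → 0 < y →
    A (γ E x) (γ F y) ≤ γ (E ∪ F) (L x y))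

def IsTnorm (T : ℝ → ℝ → ℝ) : Prop :=
  (∀ u v, T u v = T v u) ∧ (∀ u v w, T (T u v) w = T u (T v w)) ∧
  (∀ u u' v, u ∈ Icc (0:ℝ) 1 → u' ∈ Icc (0:ℝ) 1 → v ∈ Icc (0:ℝ) 1 → u ≤ u' →
    T u v ≤ T u' v) ∧
  (∀ u ∈ Icc (0:ℝ) 1, T u 1 = u) ∧
  (∀ u v, u ∈ Icc (0:ℝ) 1 → v ∈ Icc (0:ℝ) 1 → T u v ∈ Icc (0:ℝ) 1)

theorem key_aux {a b c : ℝ≥0∞} (h : c ≤ a + b) {x y z : ℝ} (hx : 0 < x) (hy : 0 < y)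
    (hz : x + y ≤ z) :
    max ((if x ≤ 0 then 0 else if a = ∞ then 0 else max (min (1 + x - a.toReal) 1) 0) +
      (if y ≤ 0 then 0 else if b = ∞ then 0 else max (min (1 + y - b.toReal) 1) 0) - 1) 0 ≤
    (if z ≤ 0 then (0 : ℝ) else if c = ∞ then 0 else max (min (1 + z - c.toReal) 1) 0) := by
  have hz0 : ¬ z ≤ 0 := by linarith
  rw [if_neg hx.not_ge, if_neg hy.not_ge, if_neg hz0]
  have h0 : (0 : ℝ) ≤ (if c = ∞ then (0 : ℝ) else max (min (1 + z - c.toReal) 1) 0) := by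
    split_ifs
    · exact le_rfl
    · exact le_max_right _ _
  have h1 : ∀ t : ℝ, max (min t 1) 0 ≤ 1 := fun t =>
    max_le (min_le_right _ _) zero_le_one
  refine max_le ?_ h0
  by_cases ha : a = ∞
  · rw [if_pos ha]
    refine le_trans ?_ h0
    split_ifs
    · norm_num
    · linarith [h1 (1 + y - b.toReal)]
  by_cases hb : b = ∞
  · rw [if_pos hb, if_neg ha]
    refine le_trans ?_ h0
    linarith [h1 (1 + x - a.toReal)]
  have hab : a + b ≠ ∞ := ENNReal.add_ne_top.2 ⟨ha, hb⟩
  have hc : c ≠ ∞ := ne_top_of_le_ne_top hab h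
  have hr : c.toReal ≤ a.toReal + b.toReal := by
    rw [← ENNReal.toReal_add ha hb]
    exact ENNReal.toReal_mono hab h
  rw [if_neg ha, if_neg hb, if_neg hc]
  generalize a.toReal = p at *
  generalize b.toReal = q at *
  generalize c.toReal = r at *
  rcases max_cases (min (1 + x - p) 1) 0 with h2 | h2 <;>
  rcases max_cases (min (1 + y - q) 1) 0 with h3 | h3 <;>
  rcases max_cases (min (1 + z - r) 1) 0 with h4 | h4 <;>
  rcases min_cases (1 + x - p) 1 with h5 | h5 <;>
  rcases min_cases (1 + y - q) 1 with h6 | h6 <;>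
  rcases min_cases (1 + z - r) 1 with h7 | h7 <;> linarith

theorem mono_aux {a b : ℝ≥0∞} (h : a ≤ b) {x y : ℝ} (hxy : x ≤ y) :
    (if x ≤ 0 then 0 else if b = ∞ then 0 else max (min (1 + x - b.toReal) 1) 0) ≤
    (if y ≤ 0 then (0 : ℝ) else if a = ∞ then 0 else max (min (1 + y - a.toReal) 1) 0) := by
  have h0 : (0 : ℝ) ≤
      (if y ≤ 0 then (0 : ℝ) else if a = ∞ then 0 else max (min (1 + y - a.toReal) 1) 0) := by
    split_ifs
    · exact le_rfl
    · exact le_rfl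
    · exact le_max_right _ _
  by_cases hx : x ≤ 0
  · rw [if_pos hx]; exact h0
  by_cases hb : b = ∞
  · rw [if_neg hx, if_pos hb]; exact h0
  have hy : ¬ y ≤ 0 := fun h => hx (hxy.trans h)
  have ha : a ≠ ∞ := ne_top_of_le_ne_top hb h
  have hr := ENNReal.toReal_mono hb h
  rw [if_neg hx, if_neg hb, if_neg hy, if_neg ha]
  exact max_le_max (min_le_min (by linarith) le_rfl) le_rfl

/-- `γ_E(x) = max(min(1 + x - η E, 1), 0)` is a `τ_{L,W}`-submeasure for
every `L ≥ K₁`, `W` the Łukasiewicz t-norm; in particular the `L = +` inequality holds. -/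
theorem stmt8 {Ω : Type*} (R : Set (Set Ω)) (hR : IsSetRing R)
    (η : Set Ω → ℝ≥0∞) (hη : IsNumSubmeasure R η)
    (L : ℝ → ℝ → ℝ) (hL : ∀ x y : ℝ, x + y ≤ L x y) :
    IsTauSub R L (fun u v => max (u + v - 1) 0)
      (fun E x => if x ≤ 0 then 0 else if η E = ∞ then 0
        else max (min (1 + x - (η E).toReal) 1) 0) ∧
    ∀ E F : Set Ω, E ∈ R → F ∈ R → ∀ x y : ℝ, 0 < x → 0 < y →
      max ((if x ≤ 0 then 0 else if η E = ∞ then 0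
              else max (min (1 + x - (η E).toReal) 1) 0) +
           (if y ≤ 0 then 0 else if η F = ∞ then 0
              else max (min (1 + y - (η F).toReal) 1) 0) - 1) 0 ≤
        (if x + y ≤ 0 then 0 else if η (E ∪ F) = ∞ then 0
          else max (min (1 + (x + y) - (η (E ∪ F)).toReal) 1) 0) := by
  obtain ⟨h0, hm, hs⟩ := hη
  refine ⟨⟨fun E hE => ⟨fun x y hxy => mono_aux le_rfl hxy, fun x hx => if_pos hx, fun x => ?_⟩,
    fun x => ?_, fun E F hE hF hEF x => mono_aux (hm E F hE hF hEF) le_rfl,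
    fun E F hE hF x y hx hy => key_aux (hs E F hE hF) hx hy (hL x y)⟩,
    fun E F hE hF x y hx hy => key_aux (hs E F hE hF) hx hy le_rfl⟩
  · dsimp only
    split_ifs
    · exact zero_le_one
    · exact zero_le_one
    · exact max_le (min_le_right _ _) zero_le_one
  · dsimp only [eps0]
    rw [h0]
    by_cases hx : x ≤ 0
    · rw [if_pos hx, if_neg hx.not_gt]
    · rw [if_neg hx, if_neg ENNReal.zero_ne_top, if_pos (not_le.1 hx), ENNReal.toReal_zero,
        min_eq_right (by linarith), max_eq_left zero_le_one]
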